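/- Let φ : ℂ³ × ℂ³ → ℂ³ × ℂ³ be given by φ(z_1, z_2, z_3, w_1, w_2, w_3) = (i·w_2, i·w_1, z_3, i·z_2, i·z_1, w_3), where i = √−1. Then: (a) φ is equivariant for the two ℂ^×-actions: for every t ∈ ℂ^×, φ(t^{−2}z_1, t^{3}z_2, t^{6}z_3, t^{2}w_1, t^{−3}w_2, t^{−6}w_3) = t •_B φ(z,w), where t •_B (u,v) = (t^{−3}u_1, t^{2}u_2, t^{6}u_3, t^{3}v_1, t^{−2}v_2, t^{−6}v_3); (b) φ preserves the complex symplectic form ω((z,w),(z′,w′)) = Σ_{j=1}^{3}(z_j w′_j − w_j z′_j), i.e. ω(φ(x), φ(y)) = ω(x, y) for all x, y ∈ ℂ³ × ℂ³; (c) φ pulls back the moment polynomial: J_B(φ(z,w)) = J_A(z,w), where J_A(z,w) = −2 z_1 w_1 + 3 z_2 w_2 + 6 z_3 w_3 and J_B(u,v) = −3 u_1 v_1 + 2 u_2 v_2 + 6 u_3 v_3. Consequently the substitution f ↦ f ∘ φ restricts to a degree-preserving ℂ-algebra isomorphism from {ℂ^×-invariant polynomials in (u,v) for the B-action}/(J_B)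 onto {ℂ^×-invariant polynomials in (z,w) for the A-action}/(J_A). -/

import Mathlib

open Complex MvPolynomial

/-- Points of `ℂ³ × ℂ³` (`(z, w)`, complexified coordinates). -/
abbrev Pt6 := (Fin 3 → ℂ) × (Fin 3 → ℂ)

/-- The linear map `φ(z₁,z₂,z₃,w₁,w₂,w₃) = (i w₂, i w₁, z₃, i z₂, i z₁, w₃)`. -/
noncomputable def phiPt (p : Pt6) : Pt6 :=
  (![I * p.2 1, I * p.2 0, p.1 2], ![I * p.1 1, I * p.1 0, p.2 2])

/-- The complexified `ℂ^×`-action for the weight row `A = (-2, 3, 6)`. -/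
noncomputable def actApt (t : ℂ) (p : Pt6) : Pt6 :=
  (![t ^ (-2 : ℤ) * p.1 0, t ^ (3 : ℤ) * p.1 1, t ^ (6 : ℤ) * p.1 2],
   ![t ^ (2 : ℤ) * p.2 0, t ^ (-3 : ℤ) * p.2 1, t ^ (-6 : ℤ) * p.2 2])

/-- The complexified `ℂ^×`-action for the weight row `B = (-3, 2, 6)`. -/
noncomputable def actBpt (t : ℂ) (p : Pt6) : Pt6 :=
  (![t ^ (-3 : ℤ) * p.1 0, t ^ (2 : ℤ) * p.1 1, t ^ (6 : ℤ) * p.1 2],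
   ![t ^ (3 : ℤ) * p.2 0, t ^ (-2 : ℤ) * p.2 1, t ^ (-6 : ℤ) * p.2 2])

/-- The complex symplectic form `ω((z,w),(z',w')) = Σ_j (z_j w'_j - w_j z'_j)`. -/
noncomputable def omegaC (p q : Pt6) : ℂ :=
  ∑ j, (p.1 j * q.2 j - p.2 j * q.1 j)

/-- The moment polynomial function `J_A(z,w) = -2 z₁ w₁ + 3 z₂ w₂ + 6 z₃ w₃`. -/
noncomputable def JApt (p : Pt6) : ℂ :=
  -2 * p.1 0 * p.2 0 + 3 * p.1 1 * p.2 1 + 6 * p.1 2 * p.2 2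

/-- The moment polynomial function `J_B(u,v) = -3 u₁ v₁ + 2 u₂ v₂ + 6 u₃ v₃`. -/
noncomputable def JBpt (p : Pt6) : ℂ :=
  -3 * p.1 0 * p.2 0 + 2 * p.1 1 * p.2 1 + 6 * p.1 2 * p.2 2

/-- The polynomial ring in the variables `(z_1,z_2,z_3,w_1,w_2,w_3)` (the left summand
indexes the `z`'s, the right the `w`'s). -/
abbrev P6 := MvPolynomial (Fin 3 ⊕ Fin 3) ℂ

/-- The substitution action of `t ∈ ℂ^×` on polynomials for the weight row `A = (-2,3,6)`. -/
noncomputable def actPA (t : ℂ) : P6 →ₐ[ℂ] P6 :=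
  aeval fun x => Sum.elim
    (fun i => C (t ^ (![(-2 : ℤ), 3, 6] i)) * X (Sum.inl i))
    (fun i => C (t ^ (![(2 : ℤ), -3, -6] i)) * X (Sum.inr i)) x

/-- The substitution action of `t ∈ ℂ^×` on polynomials for the weight row `B = (-3,2,6)`. -/
noncomputable def actPB (t : ℂ) : P6 →ₐ[ℂ] P6 :=
  aeval fun x => Sum.elim
    (fun i => C (t ^ (![(-3 : ℤ), 2, 6] i)) * X (Sum.inl i))
    (fun i => C (t ^ (![(3 : ℤ), -2, -6] i)) * X (Sum.inr i)) x

/-- The invariant polynomials for the `A`-action. -/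
noncomputable def invA : Subalgebra ℂ P6 where
  carrier := {f | ∀ t : ℂ, t ≠ 0 → actPA t f = f}
  mul_mem' hf hg t ht := by rw [map_mul, hf t ht, hg t ht]
  add_mem' hf hg t ht := by rw [map_add, hf t ht, hg t ht]
  one_mem' t ht := map_one _
  zero_mem' t ht := map_zero _
  algebraMap_mem' r t ht := (actPA t).commutes r

/-- The invariant polynomials for the `B`-action. -/
noncomputable def invB : Subalgebra ℂ P6 where
  carrier := {f | ∀ t : ℂ, t ≠ 0 → actPB t f = f}
  mul_mem' hf hg t ht := by rw [map_mul, hf t ht, hg t ht]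
  add_mem' hf hg t ht := by rw [map_add, hf t ht, hg t ht]
  one_mem' t ht := map_one _
  zero_mem' t ht := map_zero _
  algebraMap_mem' r t ht := (actPB t).commutes r

/-- The moment polynomial `J_A = -2 z₁ w₁ + 3 z₂ w₂ + 6 z₃ w₃`. -/
noncomputable def JApoly : P6 :=
  C (-2 : ℂ) * X (Sum.inl 0) * X (Sum.inr 0) + C (3 : ℂ) * X (Sum.inl 1) * X (Sum.inr 1)
    + C (6 : ℂ) * X (Sum.inl 2) * X (Sum.inr 2)

/-- The moment polynomial `J_B = -3 u₁ v₁ + 2 u₂ v₂ + 6 u₃ v₃`. -/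
noncomputable def JBpoly : P6 :=
  C (-3 : ℂ) * X (Sum.inl 0) * X (Sum.inr 0) + C (2 : ℂ) * X (Sum.inl 1) * X (Sum.inr 1)
    + C (6 : ℂ) * X (Sum.inl 2) * X (Sum.inr 2)

/-- The ideal generated by `J_A` in the `A`-invariants. -/
noncomputable def idealA : Ideal invA := Ideal.span {f : invA | (f : P6) = JApoly}

/-- The ideal generated by `J_B` in the `B`-invariants. -/
noncomputable def idealB : Ideal invB := Ideal.span {f : invB | (f : P6) = JBpoly}

/-- The pullback `f ↦ f ∘ φ`, as the substitution
`u₁ ↦ i w₂, u₂ ↦ i w₁, u₃ ↦ z₃, v₁ ↦ i z₂, v₂ ↦ i z₁, v₃ ↦ w₃`. -/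
noncomputable def phiStar : P6 →ₐ[ℂ] P6 :=
  aeval fun x => Sum.elim
    (fun i => ![C I * X (Sum.inr 1), C I * X (Sum.inr 0), X (Sum.inl 2)] i)
    (fun i => ![C I * X (Sum.inl 1), C I * X (Sum.inl 0), X (Sum.inr 2)] i) x

/-!
A polynomial over `ℂ` is determined by its values, and `phiStar`, `actPA`, `actPB` are precomposition
with `phiPt`, `actApt`, `actBpt`. So every identity between substitutions is an identity between maps
of `ℂ³ × ℂ³`. In particular `φ` has order four, which makes `phiStar` an automorphism whose inverse
`phiStar ^ 3` is again a linear substitution, and equivariance makes `phiStar f` invariant for `A`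
exactly when `f` is invariant for `B`. Finally `phiStar` takes `J_B` to `J_A`, so it descends to the
quotients.
-/

section Restriction

variable {R A B : Type*} [CommSemiring R] [Semiring A] [Semiring B] [Algebra R A] [Algebra R B]
  {S : Subalgebra R A} {T : Subalgebra R B}

/-- The restriction of an algebra isomorphism `e : A ≃ₐ[R] B` to subalgebras `S` of `A` and `T` of
`B` that correspond to each other under `e`. -/
def subalgebraEquivOfMemIff (e : A ≃ₐ[R] B) (hST : ∀ a, e a ∈ T ↔ a ∈ S) : S ≃ₐ[R] T :=
  (e.subalgebraMap S).trans <| Subalgebra.equivOfEq _ _ <|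
    SetLike.coe_injective (e.toEquiv.bijOn hST).image_eq

theorem coe_subalgebraEquivOfMemIff (e : A ≃ₐ[R] B) (hST : ∀ a, e a ∈ T ↔ a ∈ S) (x : S) :
    (subalgebraEquivOfMemIff e hST x : B) = e x :=
  rfl

theorem image_subalgebraEquivOfMemIff (e : A ≃ₐ[R] B) (hST : ∀ a, e a ∈ T ↔ a ∈ S)
    {s : Set A} {t : Set B} (hst : ∀ a, e a ∈ t ↔ a ∈ s) :
    subalgebraEquivOfMemIff e hST '' {x : S | (x : A) ∈ s} = {y : T | (y : B) ∈ t} :=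
  ((subalgebraEquivOfMemIff e hST).toEquiv.bijOn fun x => hst x).image_eq

theorem map_subalgebraEquivOfMemIff_span_coe_eq (e : A ≃ₐ[R] B) (hST : ∀ a, e a ∈ T ↔ a ∈ S)
    (a : A) :
    (Ideal.span {x : S | (x : A) = a}).map (subalgebraEquivOfMemIff e hST : S →+* T) =
      Ideal.span {y : T | (y : B) = e a} := by
  rw [Ideal.map_span]
  exact congrArg Ideal.span <|
    image_subalgebraEquivOfMemIff e hST (s := {a}) (t := {e a}) fun _ => e.injective.eq_iff

end Restriction

theorem isHomogeneous_aeval_of_isHomogeneous_one {σ τ R : Type*} [CommSemiring R]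
    {g : σ → MvPolynomial τ R} (hg : ∀ i, (g i).IsHomogeneous 1) {f : MvPolynomial σ R} {d : ℕ}
    (hf : f.IsHomogeneous d) : (aeval g f).IsHomogeneous d := by
  simpa only [one_mul] using hf.aeval g hg

theorem phiPt_actApt (t : ℂ) (p : Pt6) : phiPt (actApt t p) = actBpt t (phiPt p) := by
  ext i <;> fin_cases i <;>
    simp only [phiPt, actApt, actBpt, Fin.zero_eta, Fin.mk_one, Fin.reduceFinMk,
      Matrix.cons_val] <;>
    ring

theorem omegaC_phiPt (p q : Pt6) : omegaC (phiPt p) (phiPt q) = omegaC p q := by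
  simp only [omegaC, phiPt, Fin.sum_univ_three, Matrix.cons_val]
  linear_combination (p.2 1 * q.1 1 + p.2 0 * q.1 0 - p.1 1 * q.2 1 - p.1 0 * q.2 0) * I_mul_I

theorem JBpt_phiPt (p : Pt6) : JBpt (phiPt p) = JApt p := by
  simp only [JBpt, JApt, phiPt, Matrix.cons_val]
  linear_combination (-3 * p.2 1 * p.1 1 + 2 * p.2 0 * p.1 0) * I_mul_I

theorem phiPt_phiPt (p : Pt6) :
    phiPt (phiPt p) = (![-p.1 0, -p.1 1, p.1 2], ![-p.2 0, -p.2 1, p.2 2]) := by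
  simp only [phiPt, Matrix.cons_val, ← mul_assoc, I_mul_I, neg_one_mul]

theorem phiPt_iterate_four : phiPt^[4] = id := by
  funext p
  change phiPt (phiPt (phiPt (phiPt p))) = p
  rw [phiPt_phiPt, phiPt_phiPt]
  ext i <;> fin_cases i <;> simp

/-- Evaluation of polynomials in `(z, w)` at a point of `ℂ³ × ℂ³`; it relates the substitutions
`phiStar`, `actPA`, `actPB` to the maps of points that they are dual to. -/
noncomputable def evalPt (p : Pt6) : P6 →ₐ[ℂ] ℂ :=
  aeval (Sum.elim p.1 p.2)

theorem ext_evalPt {f g : P6} (h : ∀ p, evalPt p f = evalPt p g) : f = g :=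
  MvPolynomial.funext fun x => by
    simpa only [evalPt, Sum.elim_comp_inl_inr, aeval_eq_eval] using
      h (x ∘ Sum.inl, x ∘ Sum.inr)

theorem evalPt_phiStar (p : Pt6) (f : P6) : evalPt p (phiStar f) = evalPt (phiPt p) f := by
  have h : (evalPt p).comp phiStar = evalPt (phiPt p) := by
    ext (i | i) <;> fin_cases i <;> simp [evalPt, phiStar, phiPt]
  exact DFunLike.congr_fun h f

theorem evalPt_actPA (t : ℂ) (p : Pt6) (f : P6) :
    evalPt p (actPA t f) = evalPt (actApt t p) f := by
  have h : (evalPt p).comp (actPA t) = evalPt (actApt t p) := by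
    ext (i | i) <;> fin_cases i <;> simp [evalPt, actPA, actApt]
  exact DFunLike.congr_fun h f

theorem evalPt_actPB (t : ℂ) (p : Pt6) (f : P6) :
    evalPt p (actPB t f) = evalPt (actBpt t p) f := by
  have h : (evalPt p).comp (actPB t) = evalPt (actBpt t p) := by
    ext (i | i) <;> fin_cases i <;> simp [evalPt, actPB, actBpt]
  exact DFunLike.congr_fun h f

theorem evalPt_JApoly (p : Pt6) : evalPt p JApoly = JApt p := by
  simp [evalPt, JApoly, JApt]

theorem evalPt_JBpoly (p : Pt6) : evalPt p JBpoly = JBpt p := by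
  simp [evalPt, JBpoly, JBpt]

theorem evalPt_phiStar_iterate (n : ℕ) (p : Pt6) (f : P6) :
    evalPt p (phiStar^[n] f) = evalPt (phiPt^[n] p) f := by
  induction n generalizing f with
  | zero => rfl
  | succ n ih => rw [Function.iterate_succ_apply, ih, evalPt_phiStar, Function.iterate_succ_apply']

theorem phiStar_pow_four : phiStar ^ 4 = 1 :=
  AlgHom.ext fun f => ext_evalPt fun p => by
    rw [AlgHom.coe_pow, evalPt_phiStar_iterate, phiPt_iterate_four, id, AlgHom.one_apply]

theorem actPA_phiStar (t : ℂ) (f : P6) : actPA t (phiStar f) = phiStar (actPB t f) :=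
  ext_evalPt fun p => by
    rw [evalPt_actPA, evalPt_phiStar, phiPt_actApt, evalPt_phiStar, evalPt_actPB]

theorem phiStar_JBpoly : phiStar JBpoly = JApoly :=
  ext_evalPt fun p => by
    rw [evalPt_phiStar, evalPt_JBpoly, JBpt_phiPt, evalPt_JApoly]

/-- The pullback `f ↦ f ∘ φ` as an automorphism of the polynomial ring; its inverse is the pullback
along `φ³ = φ⁻¹`. -/
noncomputable def phiStarEquiv : P6 ≃ₐ[ℂ] P6 :=
  AlgEquiv.algHomUnitsEquiv ℂ P6 (Units.ofPowEqOne phiStar 4 phiStar_pow_four four_ne_zero)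

theorem phiStarEquiv_apply (f : P6) : phiStarEquiv f = phiStar f :=
  rfl

theorem phiStar_mem_invA_iff {f : P6} : phiStar f ∈ invA ↔ f ∈ invB :=
  forall₂_congr fun t _ => by
    rw [actPA_phiStar, ← phiStarEquiv_apply, ← phiStarEquiv_apply, EmbeddingLike.apply_eq_iff_eq]

theorem isHomogeneous_phiStar {f : P6} {d : ℕ} (hf : f.IsHomogeneous d) :
    (phiStar f).IsHomogeneous d := by
  refine isHomogeneous_aeval_of_isHomogeneous_one ?_ hf
  rintro (i | i) <;> fin_cases i <;>
    first
    | exact isHomogeneous_X _ _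
    | exact isHomogeneous_C_mul_X _ _

theorem isHomogeneous_phiStar_iff {f : P6} {d : ℕ} :
    (phiStar f).IsHomogeneous d ↔ f.IsHomogeneous d := by
  refine ⟨fun hf => ?_, isHomogeneous_phiStar⟩
  have hf_iter : (phiStar^[4] f).IsHomogeneous d :=
    isHomogeneous_phiStar (isHomogeneous_phiStar (isHomogeneous_phiStar hf))
  rwa [← AlgHom.coe_pow, phiStar_pow_four] at hf_iter

/-- The isomorphism `f ↦ f ∘ φ` from the `B`-invariants onto the `A`-invariants. -/
noncomputable def invEquiv : invB ≃ₐ[ℂ] invA :=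
  subalgebraEquivOfMemIff phiStarEquiv fun _ => phiStar_mem_invA_iff

theorem coe_invEquiv (f : invB) : (invEquiv f : P6) = phiStar f :=
  coe_subalgebraEquivOfMemIff ..

theorem image_invEquiv_isHomogeneous (d : ℕ) :
    invEquiv '' {f : invB | (f : P6).IsHomogeneous d} = {g : invA | (g : P6).IsHomogeneous d} :=
  image_subalgebraEquivOfMemIff phiStarEquiv _ (s := {f | f.IsHomogeneous d})
    (t := {g | g.IsHomogeneous d}) fun _ => isHomogeneous_phiStar_iff

theorem map_invEquiv_idealB : idealB.map (invEquiv : invB →+* invA) = idealA := by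
  rw [idealA, ← phiStar_JBpoly]
  exact map_subalgebraEquivOfMemIff_span_coe_eq phiStarEquiv _ JBpoly

/-- The isomorphism of the quotients of the invariant algebras by the moment ideals that is induced
by `f ↦ f ∘ φ`. -/
noncomputable def quotientInvEquiv : (invB ⧸ idealB) ≃ₐ[ℂ] (invA ⧸ idealA) :=
  Ideal.quotientEquivAlg idealB idealA invEquiv map_invEquiv_idealB.symm

theorem quotientInvEquiv_mk (f : invB) :
    quotientInvEquiv (Ideal.Quotient.mk idealB f) = Ideal.Quotient.mk idealA (invEquiv f) :=
  rfl

/-- `φ` is equivariant for the two `ℂ^×`-actions, preserves the complex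
symplectic form, pulls `J_B` back to `J_A`, and consequently `f ↦ f ∘ φ` induces a
degree-preserving ℂ-algebra isomorphism of the complex symplectic quotients of
`B = (-3,2,6)` and `A = (-2,3,6)`. -/
theorem stmt15 :
    -- (a) equivariance
    (∀ t : ℂ, t ≠ 0 → ∀ p : Pt6, phiPt (actApt t p) = actBpt t (phiPt p))
    ∧
    -- (b) φ preserves the complex symplectic form
    (∀ p q : Pt6, omegaC (phiPt p) (phiPt q) = omegaC p q)
    ∧
    -- (c) φ pulls back the moment polynomial
    (∀ p : Pt6, JBpt (phiPt p) = JApt p)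
    ∧
    -- f ↦ f ∘ φ maps B-invariants to A-invariants …
    (∀ f : P6, f ∈ invB → phiStar f ∈ invA)
    ∧
    -- … and induces a degree-preserving isomorphism of the graded quotient algebras
    (∃ Φ : (invB ⧸ idealB) ≃ₐ[ℂ] (invA ⧸ idealA),
      (∀ (f : invB) (g : invA), phiStar (f : P6) = (g : P6) →
          Φ (Ideal.Quotient.mk idealB f) = Ideal.Quotient.mk idealA g)
      ∧
      (∀ d : ℕ,
        Φ '' (Ideal.Quotient.mk idealB '' {f : invB | ((f : P6)).IsHomogeneous d})
          = Ideal.Quotient.mk idealA '' {g : invA | ((g : P6)).IsHomogeneous d})) := by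
  refine ⟨fun t _ => phiPt_actApt t, omegaC_phiPt, JBpt_phiPt, fun _ => phiStar_mem_invA_iff.mpr,
    quotientInvEquiv, fun f g hfg => ?_, fun d => ?_⟩
  · have hg : invEquiv f = g := Subtype.ext ((coe_invEquiv f).trans hfg)
    rw [quotientInvEquiv_mk, hg]
  · rw [Set.image_comm quotientInvEquiv_mk, image_invEquiv_isHomogeneous]
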